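/- arXiv:1212.0615 — 3 statements merged into one kernel-verified Lean document; each statement's English description precedes it below -/
import Mathlib

section
/- Let A be a unital alternative ring admitting a derivation with invertible values d, and let I be a nonzero proper left ideal of A (I ≠ 0 and I ≠ A). Then I ∩ d(I) = 0 and I + d(I) = A, i.e., A decomposes as the direct sum of additive subgroups I ⊕ d(I). -/
/-- An element of a unital (not necessarily associative) ring is invertible if it has
a two-sided inverse. -/
def IsInv {A : Type*} [NonAssocRing A] (a : A) : Prop :=
  ∃ b : A, a * b = 1 ∧ b * a = 1

/-!
By the Leibniz rule, `a * d q = d (a * q) - d a * q`, so `I + d(I)` is closed under left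
multiplication by `A`. A set with this property that contains a left-invertible element is all
of `A`. The nonzero values of `d` are left invertible, so properness of `I` forces `I ∩ d(I) = 0`,
and `I + d(I) = A` as soon as `d` does not vanish on `I`. If `x ∈ I` and `d x = 0`, then
`d a * x = d (a * x)` lies in `I ∩ d(I)`, so `d a * x = 0`; choosing `d a` left regular gives
`x = 0`.

Left-invertible elements `u` of an alternative ring are left regular: write `[x, y, z]` for the
associator, which alternates and satisfies `[x, x * y, z] = [x, y, z] * x`. If `b * u = 1` and
`u * x = 0`, then `[b, u, x] = x`, so `x * b = [b, 1, x] = 0`; hence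
`x = [u, x, b] = (u * x) * b - u * (x * b) = 0`.
-/

/-- Alternative multiplications: the left and right alternative laws, which for rings say that
the associator is an alternating function of its three arguments. -/
structure IsAlternative (A : Type*) [Mul A] : Prop where
  mul_self_mul : ∀ x y : A, (x * x) * y = x * (x * y)
  mul_mul_self : ∀ x y : A, (x * y) * y = x * (y * y)

namespace IsAlternative

variable {A : Type*} [NonUnitalNonAssocRing A] (hA : IsAlternative A) (x y z : A)

include hA

theorem associator_self_left : associator x x y = 0 :=
  sub_eq_zero.2 (hA.mul_self_mul x y)

theorem associator_self_right : associator x y y = 0 :=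
  sub_eq_zero.2 (hA.mul_mul_self x y)

theorem associator_swap_left : associator y x z = -associator x y z := by
  have polarized : associator (x + y) (x + y) z = associator x x z + associator y y z +
      (associator x y z + associator y x z) := by
    simp only [associator_apply, add_mul, mul_add]
    abel
  simp only [hA.associator_self_left, zero_add] at polarized
  exact eq_neg_of_add_eq_zero_right polarized.symm

theorem associator_swap_right : associator x z y = -associator x y z := by
  have polarized : associator x (y + z) (y + z) = associator x y y + associator x z z +
      (associator x y z + associator x z y) := by
    simp only [associator_apply, add_mul, mul_add]
    abel
  simp only [hA.associator_self_right, zero_add] at polarized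
  exact eq_neg_of_add_eq_zero_right polarized.symm

theorem associator_rotate : associator y z x = associator x y z := by
  rw [hA.associator_swap_right y x z, hA.associator_swap_left x y z, neg_neg]

theorem associator_self_mul : associator x (x * y) z = associator x y z * x := by
  have cocycle_zxxy := associator_cocycle z x x y
  have cocycle_yzxx := associator_cocycle y z x x
  simp only [hA.associator_self_left, hA.associator_self_right, mul_zero, zero_mul, zero_sub,
    add_zero, neg_zero, zero_add] at cocycle_zxxy cocycle_yzxx
  calc associator x (x * y) z
      = associator z x (x * y) := hA.associator_rotate z x (x * y)
    _ = associator z (x * x) y - associator (z * x) x y := by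
        rw [← sub_eq_zero.1 cocycle_zxxy, neg_add_eq_sub]
    _ = associator y z (x * x) - associator y (z * x) x := by
        rw [hA.associator_rotate y z (x * x), hA.associator_rotate y (z * x) x]
    _ = associator y z x * x := by
        rw [← neg_sub]
        exact neg_eq_of_add_eq_zero_right cocycle_yzxx
    _ = associator x y z * x := by rw [hA.associator_rotate x y z]

end IsAlternative

theorem IsAlternative.isLeftRegular_of_mul_eq_one {A : Type*} [NonAssocRing A]
    (hA : IsAlternative A) {b u : A} (hbu : b * u = 1) : IsLeftRegular u := by
  refine isLeftRegular_iff_right_eq_zero_of_mul.2 fun x hux ↦ ?_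
  have associator_eq : associator b u x = x := by
    rw [associator_apply, hbu, hux, one_mul, mul_zero, sub_zero]
  have mul_inv_eq_zero : x * b = 0 := calc
    x * b = associator b (b * u) x := by rw [hA.associator_self_mul, associator_eq]
    _ = 0 := by rw [hbu, associator_apply, mul_one, one_mul, sub_self]
  calc x = associator u x b := by rw [hA.associator_rotate, associator_eq]
    _ = 0 := by rw [associator_apply, hux, mul_inv_eq_zero, zero_mul, mul_zero, sub_zero]

theorem eq_univ_of_mem_of_mul_eq_one {M : Type*} [MulOneClass M] {s : Set M}
    (hs : ∀ a x : M, x ∈ s → a * x ∈ s) {b u : M} (hu : u ∈ s) (hbu : b * u = 1) :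
    s = Set.univ := by
  have one_mem : 1 ∈ s := hbu ▸ hs b u hu
  exact Set.eq_univ_of_forall fun a ↦ mul_one a ▸ hs a 1 one_mem

theorem map_eq_zero_of_map_mem {M : Type*} [MulZeroOneClass M] {d : M → M} {s : Set M}
    (hs : ∀ a x : M, x ∈ s → a * x ∈ s) (hs_ne : s ≠ Set.univ)
    (hval : ∀ x ∈ s, d x = 0 ∨ ∃ b, b * d x = 1) {x : M} (hx : x ∈ s) (hdx : d x ∈ s) :
    d x = 0 :=
  (hval x hx).resolve_right fun ⟨_, hb⟩ ↦ hs_ne (eq_univ_of_mem_of_mul_eq_one hs hdx hb)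

theorem eq_zero_of_map_eq_zero {R : Type*} [NonAssocSemiring R] {d : R → R} {s : Set R}
    (hd : ∀ x y : R, d (x * y) = d x * y + x * d y) (hreg : ∃ a, IsLeftRegular (d a))
    (hs : ∀ a x : R, x ∈ s → a * x ∈ s) (hs_ne : s ≠ Set.univ)
    (hval : ∀ x ∈ s, d x = 0 ∨ ∃ b, b * d x = 1) {x : R} (hx : x ∈ s) (hdx : d x = 0) :
    x = 0 := by
  obtain ⟨a, ha⟩ := hreg
  have map_mul : d (a * x) = d a * x := by rw [hd, hdx, mul_zero, add_zero]
  have map_mul_mem : d (a * x) ∈ s := map_mul ▸ hs (d a) x hx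
  have map_mul_eq_zero := map_eq_zero_of_map_mem hs hs_ne hval (hs a x hx) map_mul_mem
  exact ha.mul_left_eq_zero_iff.1 (map_mul ▸ map_mul_eq_zero)

section Pointwise

open scoped Pointwise

theorem mul_mem_add_image {R : Type*} [NonUnitalNonAssocRing R] {d : R → R} {I : AddSubgroup R}
    (hd : ∀ x y : R, d (x * y) = d x * y + x * d y) (hI : ∀ a x : R, x ∈ I → a * x ∈ I)
    (a c : R) (hc : c ∈ (I : Set R) + d '' I) : a * c ∈ (I : Set R) + d '' I := by
  obtain ⟨p, hp, _, ⟨q, hq, rfl⟩, rfl⟩ := hc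
  refine ⟨a * p - d a * q, I.sub_mem (hI a p hp) (hI (d a) q hq), d (a * q),
    Set.mem_image_of_mem d (hI a q hq), ?_⟩
  simp only [hd, mul_add]
  abel

theorem add_image_eq_univ {R : Type*} [NonAssocRing R] {d : R → R} {I : AddSubgroup R}
    (hd : ∀ x y : R, d (x * y) = d x * y + x * d y) (hI : ∀ a x : R, x ∈ I → a * x ∈ I)
    {b x : R} (hx : x ∈ I) (hb : b * d x = 1) : (I : Set R) + d '' I = Set.univ := by
  have map_mem : d x ∈ (I : Set R) + d '' I :=
    ⟨0, I.zero_mem, d x, Set.mem_image_of_mem d hx, zero_add (d x)⟩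
  exact eq_univ_of_mem_of_mul_eq_one (mul_mem_add_image hd hI) map_mem hb

theorem ideal_direct_sum_decomposition_general {R : Type*} [NonAssocRing R] {d : R → R}
    (hd : ∀ x y : R, d (x * y) = d x * y + x * d y) (hreg : ∃ a, IsLeftRegular (d a))
    {I : AddSubgroup R} (hval : ∀ x ∈ I, d x = 0 ∨ ∃ b, b * d x = 1)
    (hI : ∀ a x : R, x ∈ I → a * x ∈ I) (hI_ne_bot : I ≠ ⊥) (hI_ne : (I : Set R) ≠ Set.univ) :
    (∀ z : R, z ∈ (I : Set R) ∩ (d '' (I : Set R)) → z = 0) ∧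
      (∀ a : R, ∃ x ∈ I, ∃ y ∈ I, a = x + d y) := by
  constructor
  · rintro _ ⟨hdy, y, hy, rfl⟩
    exact map_eq_zero_of_map_mem hI hI_ne hval hy hdy
  · intro a
    obtain ⟨x, hx, hx_ne⟩ := I.bot_or_exists_ne_zero.resolve_left hI_ne_bot
    have map_ne_zero : d x ≠ 0 := mt (eq_zero_of_map_eq_zero hd hreg hI hI_ne hval hx) hx_ne
    obtain ⟨b, hb⟩ := (hval x hx).resolve_left map_ne_zero
    have mem_sum : a ∈ (I : Set R) + d '' I := add_image_eq_univ hd hI hx hb ▸ Set.mem_univ a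
    obtain ⟨p, hp, _, ⟨q, hq, rfl⟩, rfl⟩ := mem_sum
    exact ⟨p, hp, q, hq, rfl⟩

end Pointwise

/-- If `A` is a unital alternative ring admitting a derivation with invertible values `d`,
and `I` is a nonzero proper left ideal, then `I ∩ d(I) = 0` and `I + d(I) = A`,
i.e. `A = I ⊕ d(I)` as additive groups. -/
theorem ideal_direct_sum_decomposition {A : Type*} [NonAssocRing A]
    (alt1 : ∀ x y : A, (x * x) * y = x * (x * y))
    (alt2 : ∀ x y : A, (x * y) * y = x * (y * y))
    (d : A → A)
    (hadd : ∀ x y : A, d (x + y) = d x + d y)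
    (hmul : ∀ x y : A, d (x * y) = d x * y + x * d y)
    (hnz : ∃ x : A, d x ≠ 0)
    (hval : ∀ x : A, d x = 0 ∨ IsInv (d x))
    (I : AddSubgroup A)
    (hI : ∀ a x : A, x ∈ I → a * x ∈ I)
    (hIne : I ≠ ⊥)
    (hIproper : (I : Set A) ≠ Set.univ) :
    (∀ z : A, z ∈ (I : Set A) ∩ (d '' (I : Set A)) → z = 0) ∧
      (∀ a : A, ∃ x ∈ I, ∃ y ∈ I, a = x + d y) := by
  obtain ⟨a, ha⟩ := hnz
  obtain ⟨b, -, hb⟩ := (hval a).resolve_left ha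
  have hreg : IsLeftRegular (d a) := IsAlternative.isLeftRegular_of_mul_eq_one ⟨alt1, alt2⟩ hb
  exact ideal_direct_sum_decomposition_general hmul ⟨a, hreg⟩
    (fun x _ ↦ (hval x).imp_right fun ⟨b, _, hb⟩ ↦ ⟨b, hb⟩) hI hIne hIproper
end

section
/- Let A be a finite-dimensional alternative algebra over a field of characteristic zero that is nilpotent of index s (every product of s elements, under any distribution of parentheses, is zero, and some product of s−1 elements is nonzero). Set n = ⌊s/2⌋ + 1, let Aⁿ denote the linear span of all products of at least n elements of A (with arbitrary bracketing), and let W be a linear complement to Aⁿ in A, so A = W ⊕ Aⁿ. Then the linear map φ defined by φ(w) = w for w ∈ W and φ(x) = n·x for x ∈ Aⁿ is an invertible Leibniz-derivation of A of order n. -/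
/-- The left-normed product `((x₁x₂)x₃)⋯xₙ` of a list of elements
(`0` for the empty list, which we never use). -/
def lnProd {A : Type*} [Mul A] [Zero A] : List A → A
  | [] => 0
  | a :: l => l.foldl (· * ·) a

/-- A Leibniz-derivation of order `n`: a linear endomorphism `φ` with
`φ(x₁⋯xₙ) = Σᵢ x₁⋯φ(xᵢ)⋯xₙ` (left-normed products). -/
def IsLeibnizDer {F A : Type*} [Field F] [NonUnitalNonAssocRing A] [Module F A]
    (n : ℕ) (φ : A →ₗ[F] A) : Prop :=
  ∀ x : Fin n → A,
    φ (lnProd (List.ofFn x)) =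
      ∑ i : Fin n, lnProd (List.ofFn (Function.update x i (φ (x i))))

/-- `IsProd n a` : `a` is a product of `n` elements of `A` under some
distribution of parentheses. -/
inductive IsProd {A : Type*} [Mul A] : ℕ → A → Prop
  | single (a : A) : IsProd 1 a
  | mul {m n : ℕ} {x y : A} : IsProd m x → IsProd n y → IsProd (m + n) (x * y)

/-!
Let `Aᵏ` be the span of the products of at least `k` factors, so that `Aʲ Aᵏ ⊆ Aʲ⁺ᵏ`. A left-normed
product of `n` factors, one of which lies in `Aⁿ`, lies in `A²ⁿ⁻¹ = 0`; hence such a product depends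
only on the classes of its factors modulo `Aⁿ`. Since `φ` is the identity modulo `Aⁿ`, each of the
`n` summands in the Leibniz rule equals `x₁⋯xₙ`, and their sum `n • x₁⋯xₙ` is `φ (x₁⋯xₙ)` because
`x₁⋯xₙ ∈ Aⁿ`.
-/

theorem IsProd.pos {A : Type*} [Mul A] {m : ℕ} {x : A} (h : IsProd m x) : 0 < m := by
  induction h with
  | single => exact Nat.one_pos
  | mul _ _ hm _ => exact Nat.add_pos_left hm _

theorem IsProd.of_le {A : Type*} [Mul A] {k m : ℕ} {x : A} (h : IsProd m x) (hk : 0 < k)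
    (hkm : k ≤ m) : IsProd k x := by
  induction h generalizing k with
  | single a =>
    obtain rfl : k = 1 := by omega
    exact .single a
  | @mul m n x y hx hy ihx ihy =>
    obtain rfl | hk1 : k = 1 ∨ 1 < k := by omega
    · exact .single _
    · have hm := hx.pos
      have hn := hy.pos
      obtain ⟨i, j, hi, him, hj, hjn, rfl⟩ :
          ∃ i j, 0 < i ∧ i ≤ m ∧ 0 < j ∧ j ≤ n ∧ i + j = k :=
        ⟨min m (k - 1), k - min m (k - 1), by omega⟩
      exact .mul (ihx hi him) (ihy hj hjn)

theorem lnProd_concat {A : Type*} [Mul A] [Zero A] {l : List A} (hl : l ≠ []) (a : A) :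
    lnProd (l.concat a) = lnProd l * a := by
  obtain ⟨b, l, rfl⟩ := List.exists_cons_of_ne_nil hl
  simp only [lnProd, List.concat_eq_append, List.cons_append, List.foldl_append, List.foldl_cons,
    List.foldl_nil]

section ProdSpan

variable (R A : Type*) [CommSemiring R] [NonUnitalNonAssocSemiring A] [Module R A]

/-- The power `Aᵏ` of a nonassociative algebra: the span of all products of at least `k` elements,
under any distribution of parentheses. -/
def prodSpan (k : ℕ) : Submodule R A :=
  Submodule.span R {x : A | ∃ m : ℕ, k ≤ m ∧ IsProd m x}

variable {R A}

theorem mem_prodSpan_one (x : A) : x ∈ prodSpan R A 1 :=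
  Submodule.subset_span ⟨1, le_rfl, .single x⟩

theorem prodSpan_eq_bot {s : ℕ} (hs : 0 < s) (hnil : ∀ x : A, IsProd s x → x = 0) :
    prodSpan R A s = ⊥ :=
  Submodule.span_eq_bot.2 fun x ⟨_, hsm, hx⟩ ↦ hnil x (hx.of_le hs hsm)

variable [SMulCommClass R A A] [IsScalarTower R A A]

theorem mul_mem_prodSpan {j k : ℕ} {x y : A} (hx : x ∈ prodSpan R A j)
    (hy : y ∈ prodSpan R A k) : x * y ∈ prodSpan R A (j + k) := by
  have hxy := Submodule.apply_mem_map₂ (LinearMap.mul R A) hx hy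
  rw [prodSpan, prodSpan, Submodule.map₂_span_span] at hxy
  refine Submodule.span_mono ?_ hxy
  rintro _ ⟨a, ⟨p, hp, ha⟩, b, ⟨q, hq, hb⟩, rfl⟩
  exact ⟨p + q, Nat.add_le_add hp hq, .mul ha hb⟩

variable (R A) in
/-- The left-normed product of `n + 1` elements as a multilinear map; the number of factors is
shifted by one so that `lnProd` is never applied to the empty list. -/
def lnProdMultilinear : (n : ℕ) → MultilinearMap R (fun _ : Fin (n + 1) ↦ A) A
  | 0 => MultilinearMap.ofSubsingleton R A A (0 : Fin 1) LinearMap.id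
  | n + 1 => ((LinearMap.mul R A).compMultilinearMap (lnProdMultilinear n)).uncurryRight

theorem lnProdMultilinear_zero (x : Fin 1 → A) : lnProdMultilinear R A 0 x = x 0 :=
  rfl

theorem lnProdMultilinear_succ {n : ℕ} (x : Fin (n + 2) → A) :
    lnProdMultilinear R A (n + 1) x =
      lnProdMultilinear R A n (fun i ↦ x i.castSucc) * x (Fin.last (n + 1)) :=
  rfl

theorem lnProdMultilinear_apply {n : ℕ} (x : Fin (n + 1) → A) :
    lnProdMultilinear R A n x = lnProd (List.ofFn x) := by
  induction n with
  | zero => rfl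
  | succ n ih =>
    have hne : List.ofFn (fun i : Fin (n + 1) ↦ x i.castSucc) ≠ [] := by simp
    rw [lnProdMultilinear_succ, ih, List.ofFn_succ' x, lnProd_concat hne]

theorem lnProdMultilinear_mem_prodSpan {n : ℕ} {k : Fin (n + 1) → ℕ} {x : Fin (n + 1) → A}
    (hx : ∀ i, x i ∈ prodSpan R A (k i)) :
    lnProdMultilinear R A n x ∈ prodSpan R A (∑ i, k i) := by
  induction n with
  | zero => simpa [lnProdMultilinear_zero] using hx 0
  | succ n ih =>
    rw [lnProdMultilinear_succ, Fin.sum_univ_castSucc]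
    exact mul_mem_prodSpan (ih fun i ↦ hx i.castSucc) (hx _)

theorem lnProdMultilinear_update_mem_prodSpan {m n : ℕ} (x : Fin (n + 1) → A) (i : Fin (n + 1))
    {d : A} (hd : d ∈ prodSpan R A m) :
    lnProdMultilinear R A n (Function.update x i d) ∈ prodSpan R A (m + n) := by
  have hmem : ∀ j, Function.update x i d j ∈
      prodSpan R A (Function.update (1 : Fin (n + 1) → ℕ) i m j) := by
    intro j
    obtain rfl | hj := eq_or_ne j i
    · simpa using hd
    · simpa [hj] using mem_prodSpan_one (x j)
  have hsum : ∑ j, Function.update (1 : Fin (n + 1) → ℕ) i m j = m + n := by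
    simp [Fin.sum_univ_succAbove _ i]
  exact hsum ▸ lnProdMultilinear_mem_prodSpan hmem

end ProdSpan

theorem map_sub_self_mem_of_codisjoint {R M : Type*} [Ring R] [AddCommGroup M] [Module R M]
    {W V : Submodule R M} {φ : M →ₗ[R] M} (hWV : Codisjoint W V) (hφW : ∀ w ∈ W, φ w = w)
    (hφV : ∀ v ∈ V, φ v ∈ V) (y : M) : φ y - y ∈ V := by
  obtain ⟨w, v, hw, hv, rfl⟩ := Submodule.codisjoint_iff_exists_add_eq.1 hWV y
  rw [map_add, hφW w hw, add_sub_add_left_eq_sub]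
  exact V.sub_mem (hφV v hv) hv

theorem bijective_of_codisjoint {R M : Type*} [CommRing R] [AddCommGroup M] [Module R M]
    {W V : Submodule R M} {φ : M →ₗ[R] M} (c : Rˣ) (hWV : Codisjoint W V) (hφW : ∀ w ∈ W, φ w = w)
    (hφV : ∀ v ∈ V, φ v = (c : R) • v) : Function.Bijective φ := by
  -- `φ` is annihilated by `(t - 1)(t - c)`, so its inverse is `c⁻¹ (1 + c - φ)`.
  have hquad : ∀ y, (1 + c : R) • φ y - φ (φ y) = (c : R) • y := by
    intro y
    obtain ⟨w, v, hw, hv, rfl⟩ := Submodule.codisjoint_iff_exists_add_eq.1 hWV y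
    simp only [map_add, map_smul, hφW w hw, hφV v hv]
    module
  refine Function.bijective_iff_has_inverse.2
    ⟨fun y ↦ (↑c⁻¹ : R) • ((1 + c : R) • y - φ y), fun y ↦ ?_, fun y ↦ ?_⟩
  · simp only [hquad, smul_smul, Units.inv_mul, one_smul]
  · simp only [map_smul, map_sub, hquad, smul_smul, Units.inv_mul, one_smul]

theorem lnProdMultilinear_update_eq_of_sub_mem {R A : Type*} [CommRing R] [NonUnitalNonAssocRing A]
    [Module R A] [SMulCommClass R A A] [IsScalarTower R A A] {n : ℕ}
    (hnil : ∀ x : A, IsProd (2 * n + 1) x → x = 0) (x : Fin (n + 1) → A) (i : Fin (n + 1)) {y : A}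
    (hy : y - x i ∈ prodSpan R A (n + 1)) :
    lnProdMultilinear R A n (Function.update x i y) = lnProdMultilinear R A n x := by
  have hmem := lnProdMultilinear_update_mem_prodSpan x i hy
  rwa [show n + 1 + n = 2 * n + 1 by omega, prodSpan_eq_bot (Nat.succ_pos _) hnil,
    Submodule.mem_bot, MultilinearMap.map_update_sub, Function.update_eq_self, sub_eq_zero] at hmem

section Leibniz

variable {F A : Type*} [Field F] [NonUnitalNonAssocRing A] [Module F A] [SMulCommClass F A A]
  [IsScalarTower F A A]

theorem isLeibnizDer_of_sub_mem_prodSpan {n : ℕ} (hnil : ∀ x : A, IsProd (2 * n - 1) x → x = 0)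
    {φ : A →ₗ[F] A} (hφ : ∀ y, φ y - y ∈ prodSpan F A n)
    (hφn : ∀ x ∈ prodSpan F A n, φ x = n • x) : IsLeibnizDer n φ := by
  intro x
  obtain _ | n := n
  · simp [lnProd]
  have hmem : lnProdMultilinear F A n x ∈ prodSpan F A (n + 1) := by
    simpa using lnProdMultilinear_mem_prodSpan fun i ↦ mem_prodSpan_one (R := F) (x i)
  simp only [← lnProdMultilinear_apply (R := F)]
  calc φ (lnProdMultilinear F A n x)
    _ = ∑ _i : Fin (n + 1), lnProdMultilinear F A n x := by
      rw [hφn _ hmem, Finset.sum_const, Finset.card_univ, Fintype.card_fin]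
    _ = ∑ i, lnProdMultilinear F A n (Function.update x i (φ (x i))) :=
      Finset.sum_congr rfl fun i _ ↦
        (lnProdMultilinear_update_eq_of_sub_mem hnil x i (hφ (x i))).symm

theorem nilpotent_alternative_has_invertible_leibniz_derivation_general {n : ℕ}
    (hn : (n : F) ≠ 0) (hnil : ∀ x : A, IsProd (2 * n - 1) x → x = 0) {W : Submodule F A}
    (hW : Codisjoint W (prodSpan F A n)) {φ : A →ₗ[F] A} (hφW : ∀ w ∈ W, φ w = w)
    (hφn : ∀ x ∈ prodSpan F A n, φ x = n • x) :
    Function.Bijective φ ∧ IsLeibnizDer n φ := by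
  constructor
  · refine bijective_of_codisjoint (Units.mk0 (n : F) hn) hW hφW fun x hx ↦ ?_
    rw [hφn x hx, Units.val_mk0, Nat.cast_smul_eq_nsmul]
  · have hmaps : ∀ x ∈ prodSpan F A n, φ x ∈ prodSpan F A n := fun x hx ↦
      hφn x hx ▸ nsmul_mem hx n
    exact isLeibnizDer_of_sub_mem_prodSpan hnil (map_sub_self_mem_of_codisjoint hW hφW hmaps) hφn

end Leibniz

/-- If `A` is a nilpotent alternative algebra of nilpotency index `s` over a field of
characteristic zero, `n = ⌊s/2⌋ + 1`, `Aⁿ` is the span of products of at least `n`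
elements, and `W` is a linear complement of `Aⁿ`, then the linear map `φ` acting as the
identity on `W` and as `n • ·` on `Aⁿ` is an invertible Leibniz-derivation of order `n`. -/
theorem nilpotent_alternative_has_invertible_leibniz_derivation
    {F A : Type*} [Field F] [CharZero F]
    [NonUnitalNonAssocRing A] [Module F A] [SMulCommClass F A A] [IsScalarTower F A A]
    [FiniteDimensional F A]
    (alt1 : ∀ x y : A, (x * x) * y = x * (x * y))
    (alt2 : ∀ x y : A, (x * y) * y = x * (y * y))
    (s : ℕ)
    (hnil : ∀ x : A, IsProd s x → x = 0)
    (hindex : ∃ x : A, IsProd (s - 1) x ∧ x ≠ 0)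
    (n : ℕ) (hn : n = s / 2 + 1)
    (An : Submodule F A)
    (hAn : An = Submodule.span F {x : A | ∃ m : ℕ, n ≤ m ∧ IsProd m x})
    (W : Submodule F A) (hW : IsCompl W An)
    (φ : A →ₗ[F] A)
    (hφW : ∀ w ∈ W, φ w = w)
    (hφAn : ∀ x ∈ An, φ x = n • x) :
    Function.Bijective φ ∧ IsLeibnizDer n φ := by
  subst hAn
  have hs : 0 < s := by
    obtain ⟨x, hx, -⟩ := hindex
    exact hx.pos.trans_le (Nat.sub_le s 1)
  have hnil' : ∀ x : A, IsProd (2 * n - 1) x → x = 0 := fun x hx ↦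
    hnil x (hx.of_le hs (by omega))
  exact nilpotent_alternative_has_invertible_leibniz_derivation_general
    (Nat.cast_ne_zero.2 (by omega)) hnil' hW.codisjoint hφW hφAn
end

section
/- Let A be a finite-dimensional alternative algebra over a field F of characteristic not equal to 2, and suppose every F-linear endomorphism of A is a quasiderivation. Then either A has zero multiplication (x*y = 0 for all x, y ∈ A), or A is a field (A is nonzero, its multiplication is associative and commutative and has a unit element, and every nonzero element of A is invertible). -/
/-!
If `f` is a quasiderivation, any relation `x * y = z * w` may be differentiated along `f`, and only
the endomorphisms `v ↦ φ v • a` of rank at most one are needed. Differentiating relations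
`x * y = 0` shows that a nonzero multiplication has no zero divisors. Differentiating
`(x * x) * (x * x) = x * (x * (x * x))` along `v ↦ φ v • x`, with `φ` vanishing at `x` but not at
`x * x`, shows that `x * x` is a multiple of `x`. Some nonzero multiple `e` of a nonzero element is
then an idempotent, hence a left unit, and cancelling `x` in `x * x = c • x = (c • e) * x` shows
that `e` spans the algebra.
-/

open Module Submodule

/-- A linear endomorphism `f` is a quasiderivation if the Leibniz rule holds with the value on
products taken by a possibly different linear map `Q`. -/
def IsQuasiderivation {R A : Type*} [Semiring R] [NonUnitalNonAssocSemiring A] [Module R A]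
    (f : A →ₗ[R] A) : Prop :=
  ∃ Q : A →ₗ[R] A, ∀ x y : A, Q (x * y) = f x * y + x * f y

theorem IsQuasiderivation.mul_add_mul_congr {R A : Type*} [Semiring R]
    [NonUnitalNonAssocSemiring A] [Module R A] {f : A →ₗ[R] A} (hf : IsQuasiderivation f)
    {x y z w : A} (h : x * y = z * w) : f x * y + x * f y = f z * w + z * f w := by
  obtain ⟨Q, hQ⟩ := hf
  rw [← hQ, ← hQ, h]

theorem IsQuasiderivation.smul_mul_add_smul_mul_congr {R A : Type*} [CommSemiring R]
    [NonUnitalNonAssocSemiring A] [Module R A] [SMulCommClass R A A] [IsScalarTower R A A]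
    {φ : Dual R A} {a : A} (hφ : IsQuasiderivation (φ.smulRight a))
    {x y z w : A} (h : x * y = z * w) :
    φ x • (a * y) + φ y • (x * a) = φ z • (a * w) + φ w • (z * a) := by
  simpa only [LinearMap.smulRight_apply, smul_mul_assoc, mul_smul_comm]
    using hφ.mul_add_mul_congr h

theorem field_axioms_of_mulEquiv {K M : Type*} [CommGroupWithZero K] [MulZeroClass M]
    (φ : K ≃* M) :
    (∃ x : M, x ≠ 0) ∧ (∀ x y z : M, (x * y) * z = x * (y * z)) ∧
      (∀ x y : M, x * y = y * x) ∧
      ∃ e : M, (∀ x : M, e * x = x ∧ x * e = x) ∧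
        ∀ x : M, x ≠ 0 → ∃ y : M, x * y = e ∧ y * x = e := by
  refine ⟨⟨φ 1, by simp⟩, fun x y z ↦ ?_, fun x y ↦ ?_, φ 1, fun x ↦ ?_, fun x hx ↦ ?_⟩
  · exact φ.symm.injective (by simp only [map_mul, mul_assoc])
  · exact φ.symm.injective (by simp only [map_mul, mul_comm])
  · constructor <;> exact φ.symm.injective (by simp)
  · have hx' : φ.symm x ≠ 0 := by simpa using hx
    exact ⟨φ (φ.symm x)⁻¹, by constructor <;> exact φ.symm.injective (by simp [hx'])⟩

theorem mul_eq_self_of_isIdempotentElem {A : Type*} [NonUnitalNonAssocRing A]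
    [NoZeroDivisors A] {e : A} (he : IsIdempotentElem e) (he0 : e ≠ 0)
    (alt : ∀ y : A, (e * e) * y = e * (e * y)) (y : A) : e * y = y := by
  have h : e * (e * y - y) = 0 := by rw [mul_sub, ← alt, he.eq, sub_self]
  exact sub_eq_zero.mp ((mul_eq_zero.mp h).resolve_left he0)

section Algebra

variable {F A : Type*} [Field F] [NonUnitalNonAssocRing A] [Module F A] [SMulCommClass F A A]
  [IsScalarTower F A A]

theorem exists_nonUnitalAlgHom_bijective_of_isIdempotentElem {e : A} (he : IsIdempotentElem e)
    (he0 : e ≠ 0) (hspan : ∀ x : A, ∃ c : F, c • e = x) :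
    ∃ φ : F →ₙₐ[F] A, Function.Bijective φ :=
  ⟨{ toFun := fun c ↦ c • e
     map_smul' := fun c d ↦ mul_smul c d e
     map_zero' := zero_smul F e
     map_add' := fun c d ↦ add_smul c d e
     map_mul' := fun c d ↦ by rw [smul_mul_smul_comm, he.eq] },
    smul_left_injective F he0, hspan⟩

theorem exists_isIdempotentElem_forall_exists_smul_eq [NoZeroDivisors A] {x₀ : A} (hx₀ : x₀ ≠ 0)
    (alt : ∀ x y : A, (x * x) * y = x * (x * y))
    (hsq : ∀ x : A, ∃ c : F, c • x = x * x) :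
    ∃ e : A, IsIdempotentElem e ∧ e ≠ 0 ∧ ∀ x : A, ∃ c : F, c • e = x := by
  obtain ⟨c, hc⟩ := hsq x₀
  have hc0 : c ≠ 0 := by
    rintro rfl
    exact mul_self_ne_zero.mpr hx₀ (by rw [← hc, zero_smul])
  have he : IsIdempotentElem (c⁻¹ • x₀) := by
    rw [IsIdempotentElem, smul_mul_smul_comm, ← hc, smul_smul, inv_mul_cancel_right₀ hc0]
  have he0 : c⁻¹ • x₀ ≠ 0 := smul_ne_zero (inv_ne_zero hc0) hx₀
  refine ⟨c⁻¹ • x₀, he, he0, fun x ↦ ?_⟩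
  obtain rfl | hx := eq_or_ne x 0
  · exact ⟨0, zero_smul F _⟩
  obtain ⟨d, hd⟩ := hsq x
  have hdx : (d • c⁻¹ • x₀ - x) * x = 0 := by
    rw [sub_mul, smul_mul_assoc, mul_eq_self_of_isIdempotentElem he he0 (alt _), hd, sub_self]
  exact ⟨d, sub_eq_zero.mp ((mul_eq_zero.mp hdx).resolve_right hx)⟩

theorem mul_eq_zero_of_notMem_span_singleton
    (hq : ∀ (φ : Dual F A) (a : A), IsQuasiderivation (φ.smulRight a))
    {x y : A} (hy : y ≠ 0) (hx : x ∉ span F {y}) (hxy : x * y = 0) (z w : A) : z * w = 0 := by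
  have mul_y : ∀ a : A, a * y = 0 := by
    intro a
    obtain ⟨φ, hφx, hφ⟩ := exists_le_ker_of_notMem hx
    have hφy : φ y = 0 := hφ (mem_span_singleton_self y)
    have h := (hq φ a).smul_mul_add_smul_mul_congr (hxy.trans (zero_mul 0).symm)
    simpa [hφx, hφy] using h
  obtain ⟨φ, hφy⟩ := Projective.exists_dual_ne_zero F hy
  have h := (hq φ w).smul_mul_add_smul_mul_congr ((mul_y z).trans (zero_mul 0).symm)
  simpa [hφy, mul_y] using h

theorem forall_mul_self_eq_zero_of_mul_self_eq_zero (h2 : (2 : F) ≠ 0)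
    (hq : ∀ (φ : Dual F A) (a : A), IsQuasiderivation (φ.smulRight a))
    {x : A} (hx : x ≠ 0) (hxx : x * x = 0) (y : A) : y * y = 0 := by
  obtain ⟨φ, hφx⟩ := Projective.exists_dual_ne_zero F hx
  have anticomm_x : y * x = -x * y := by
    have h := (hq φ y).smul_mul_add_smul_mul_congr (hxx.trans (zero_mul 0).symm)
    have h' : φ x • (y * x + x * y) = 0 := by simpa [smul_add] using h
    rw [neg_mul]
    exact eq_neg_of_add_eq_zero_left ((smul_eq_zero.mp h').resolve_left hφx)
  have h : φ x • (y * y) = -(φ x • (y * y)) := by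
    simpa [anticomm_x, add_comm] using (hq φ y).smul_mul_add_smul_mul_congr anticomm_x
  have h' : (2 * φ x) • (y * y) = 0 := by
    rw [mul_smul, two_smul]
    exact eq_neg_iff_add_eq_zero.mp h
  exact (smul_eq_zero.mp h').resolve_left (mul_ne_zero h2 hφx)

theorem mul_eq_zero_of_forall_mul_self_eq_zero
    (alt : ∀ x y : A, (x * x) * y = x * (x * y))
    (hq : ∀ (φ : Dual F A) (a : A), IsQuasiderivation (φ.smulRight a))
    (hsq : ∀ x : A, x * x = 0) (y z : A) : y * z = 0 := by
  have anticomm (u v : A) : u * v = -(v * u) := by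
    have h := hsq (u + v)
    rw [mul_add, add_mul, add_mul, hsq, hsq, zero_add, add_zero] at h
    exact eq_neg_of_add_eq_zero_right h
  have mul_mul_self (u v : A) : u * (u * v) = 0 := by rw [← alt, hsq, zero_mul]
  by_contra hyz
  have hy : y ∈ span F {y * z} := by
    by_contra hy
    exact hyz (mul_eq_zero_of_notMem_span_singleton hq hyz hy (mul_mul_self y z) y z)
  obtain ⟨c, hc⟩ := mem_span_singleton.mp hy
  have hzy : z * y = 0 := by
    rw [← hc, anticomm y z, mul_smul_comm, mul_neg, mul_mul_self, neg_zero, smul_zero]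
  exact hyz (by rw [anticomm, hzy, neg_zero])

theorem noZeroDivisors_of_exists_mul_ne_zero (h2 : (2 : F) ≠ 0)
    (alt : ∀ x y : A, (x * x) * y = x * (x * y))
    (hq : ∀ (φ : Dual F A) (a : A), IsQuasiderivation (φ.smulRight a))
    (hA : ∃ x y : A, x * y ≠ 0) : NoZeroDivisors A := by
  obtain ⟨u, v, huv⟩ := hA
  refine ⟨fun {x y} hxy ↦ ?_⟩
  by_contra! hne
  obtain ⟨hx, hy⟩ := hne
  by_cases hmem : x ∈ span F {y}
  · obtain ⟨c, hc⟩ := mem_span_singleton.mp hmem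
    have hxx : x * x = 0 := by
      nth_rw 2 [← hc]
      rw [mul_smul_comm, hxy, smul_zero]
    have hsq := forall_mul_self_eq_zero_of_mul_self_eq_zero h2 hq hx hxx
    exact huv (mul_eq_zero_of_forall_mul_self_eq_zero alt hq hsq u v)
  · exact huv (mul_eq_zero_of_notMem_span_singleton hq hy hmem hxy u v)

theorem exists_smul_eq_mul_self [NoZeroDivisors A] (h2 : (2 : F) ≠ 0)
    (alt : ∀ x y : A, (x * x) * y = x * (x * y))
    (hq : ∀ (φ : Dual F A) (a : A), IsQuasiderivation (φ.smulRight a)) (x : A) :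
    ∃ c : F, c • x = x * x := by
  rw [← mem_span_singleton]
  by_contra hxx
  obtain ⟨φ, hφxx, hφ⟩ := exists_le_ker_of_notMem hxx
  have hφx : φ x = 0 := hφ (mem_span_singleton_self x)
  have hrel : (2 * φ (x * x)) • (x * (x * x)) = φ (x * (x * x)) • (x * x) := by
    simpa [hφx, alt, two_mul, add_smul] using
      (hq φ x).smul_mul_add_smul_mul_congr (alt x (x * x))
  have hφxxx : φ (x * (x * x)) = 0 := by
    have h : φ (x * x) * φ (x * (x * x)) = 0 := by
      have hφrel := congrArg φ hrel
      simp only [map_smul, smul_eq_mul] at hφrel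
      linear_combination hφrel
    exact (mul_eq_zero.mp h).resolve_left hφxx
  have hxxx : x * (x * x) = 0 := by
    rw [hφxxx, zero_smul] at hrel
    exact (smul_eq_zero.mp hrel).resolve_left (mul_ne_zero h2 hφxx)
  have hx : x = 0 := by simpa using hxxx
  exact hφxx (by rw [hx, mul_zero, map_zero])

end Algebra

theorem alternative_all_endomorphisms_quasiderivations_general
    {F A : Type*} [Field F] (hchar : ringChar F ≠ 2)
    [NonUnitalNonAssocRing A] [Module F A] [SMulCommClass F A A] [IsScalarTower F A A]
    (alt : ∀ x y : A, (x * x) * y = x * (x * y))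
    (hq : ∀ (φ : Dual F A) (a : A), IsQuasiderivation (φ.smulRight a)) :
    (∀ x y : A, x * y = 0) ∨ ∃ φ : F →ₙₐ[F] A, Function.Bijective φ := by
  have h2 : (2 : F) ≠ 0 := Ring.two_ne_zero hchar
  rw [or_iff_not_imp_left]
  intro hA
  push Not at hA
  have : NoZeroDivisors A := noZeroDivisors_of_exists_mul_ne_zero h2 alt hq hA
  obtain ⟨x, y, hxy⟩ := hA
  obtain ⟨e, he, he0, hspan⟩ :=
    exists_isIdempotentElem_forall_exists_smul_eq (left_ne_zero_of_mul hxy) alt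
      (exists_smul_eq_mul_self h2 alt hq)
  exact exists_nonUnitalAlgHom_bijective_of_isIdempotentElem he he0 hspan

/-- If `A` is a finite-dimensional alternative algebra over a field of characteristic ≠ 2
in which every linear endomorphism is a quasiderivation, then `A` has zero
multiplication or `A` is a field. -/
theorem alternative_all_endomorphisms_quasiderivations
    {F A : Type*} [Field F] (hchar : ringChar F ≠ 2)
    [NonUnitalNonAssocRing A] [Module F A] [SMulCommClass F A A] [IsScalarTower F A A]
    [FiniteDimensional F A]
    (alt1 : ∀ x y : A, (x * x) * y = x * (x * y))
    (alt2 : ∀ x y : A, (x * y) * y = x * (y * y))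
    (hq : ∀ f : A →ₗ[F] A, ∃ Q : A →ₗ[F] A, ∀ x y : A, Q (x * y) = f x * y + x * f y) :
    (∀ x y : A, x * y = 0) ∨
      ((∃ x : A, x ≠ 0) ∧ (∀ x y z : A, (x * y) * z = x * (y * z)) ∧
        (∀ x y : A, x * y = y * x) ∧
        ∃ e : A, (∀ x : A, e * x = x ∧ x * e = x) ∧
          ∀ x : A, x ≠ 0 → ∃ y : A, x * y = e ∧ y * x = e) :=
  (alternative_all_endomorphisms_quasiderivations_general hchar alt1 fun φ a ↦
    hq (φ.smulRight a)).imp_right fun ⟨φ, hφ⟩ ↦ field_axioms_of_mulEquiv (.ofBijective φ hφ)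
end
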